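/- arXiv:2410.14750 — 2 statements merged into one kernel-verified Lean document; each statement's English description precedes it below -/
import Mathlib

section
/- Let (R, m) be a local Artinian commutative ring with residue field F = R/m, and let μ and λ be cardinals (index sets). Then R^μ and R^λ are isomorphic as R-modules if and only if F^μ and F^λ are isomorphic as F-vector spaces. -/
/-!
Tensoring with a finitely presented module commutes with arbitrary products. Over a Noetherian
ring this makes products of flat modules flat (Chase), and over an Artinian local ring `R` with
residue field `k` it makes the formation of products compatible with base change to `k`. Since the
maximal ideal of `R` is nilpotent, Nakayama's lemma needs no finiteness assumption, so every basis
of `k ⊗ M` lifts to a basis of the flat module `M`. Hence flat modules are determined up to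
isomorphism by their base change to `k`, and this applies to `R^ι`, whose base change is `k^ι`.
-/

universe u

open TensorProduct IsLocalRing Function

section TensorPi

variable {R : Type*} [CommRing R] {N P : Type*} [AddCommGroup N] [Module R N]
  [AddCommGroup P] [Module R P] {ι : Type*} (M : ι → Type*) [∀ i, AddCommGroup (M i)]
  [∀ i, Module R (M i)]

theorem piRightHom_rTensor (p : N →ₗ[R] P) (x : N ⊗[R] ∀ i, M i) (i : ι) :
    piRightHom R R P M (p.rTensor _ x) i = p.rTensor (M i) (piRightHom R R N M x i) := by
  induction x with
  | zero => simp only [map_zero, Pi.zero_apply]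
  | tmul n m => rfl
  | add x y hx hy => simp only [map_add, Pi.add_apply, hx, hy]

theorem equivFinsuppOfBasisLeft_piRightHom {B : Type*} [DecidableEq B] (b : Module.Basis B R N)
    (x : N ⊗[R] ∀ i, M i) (i : ι) (j : B) :
    equivFinsuppOfBasisLeft b (piRightHom R R N M x i) j = equivFinsuppOfBasisLeft b x j i := by
  induction x with
  | zero => simp only [map_zero, Pi.zero_apply, Finsupp.coe_zero]
  | tmul n m => simp only [piRightHom_tmul, equivFinsuppOfBasisLeft_apply_tmul_apply, Pi.smul_apply]
  | add x y hx hy => simp only [map_add, Pi.add_apply, Finsupp.add_apply, hx, hy]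

theorem piRightHom_injective_of_free [Module.Free R N] : Injective (piRightHom R R N M) := by
  classical
  let b := Module.Free.chooseBasis R N
  intro x y hxy
  apply (equivFinsuppOfBasisLeft b).injective
  ext j i
  rw [← equivFinsuppOfBasisLeft_piRightHom, hxy, equivFinsuppOfBasisLeft_piRightHom]

theorem piRightHom_surjective_of_free [Module.Free R N] [Module.Finite R N] :
    Surjective (piRightHom R R N M) := by
  classical
  let b := Module.Free.chooseBasis R N
  intro y
  let c := Finsupp.equivFunOnFinite.symm fun j i ↦ equivFinsuppOfBasisLeft b (y i) j
  refine ⟨(equivFinsuppOfBasisLeft b).symm c, ?_⟩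
  ext i
  apply (equivFinsuppOfBasisLeft b).injective
  ext j
  rw [equivFinsuppOfBasisLeft_piRightHom, LinearEquiv.apply_symm_apply]
  rfl

theorem piRightHom_surjective [Module.Finite R N] : Surjective (piRightHom R R N M) := by
  obtain ⟨n, p, hp⟩ := Module.Finite.exists_fin' R N
  intro y
  choose z hz using fun i ↦ LinearMap.rTensor_surjective (M i) hp (y i)
  obtain ⟨x, rfl⟩ := piRightHom_surjective_of_free M z
  exact ⟨p.rTensor _ x, funext fun i ↦ (piRightHom_rTensor M p x i).trans (hz i)⟩

theorem piRightHom_injective [Module.FinitePresentation R N] :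
    Injective (piRightHom R R N M) := by
  obtain ⟨n, p, hp⟩ := Module.Finite.exists_fin' R N
  let K := LinearMap.ker p
  have : Module.Finite R K := .of_fg (Module.FinitePresentation.fg_ker p hp)
  have hex : Exact K.subtype p := LinearMap.exact_subtype_ker_map p
  rw [injective_iff_map_eq_zero]
  intro x hx
  obtain ⟨y, rfl⟩ := LinearMap.rTensor_surjective _ hp x
  have hy (i : ι) : ∃ z, K.subtype.rTensor (M i) z = piRightHom R R _ M y i := by
    apply (rTensor_exact (M i) hex hp _).mp
    rw [← piRightHom_rTensor, hx, Pi.zero_apply]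
  choose z hz using hy
  obtain ⟨w, rfl⟩ := piRightHom_surjective M z
  have hw : K.subtype.rTensor _ w = y := by
    apply piRightHom_injective_of_free M
    ext i
    rw [piRightHom_rTensor, hz]
  exact (rTensor_exact _ hex hp y).mpr ⟨w, hw⟩

theorem flat_pi [IsNoetherianRing R] [∀ i, Module.Flat R (M i)] : Module.Flat R (∀ i, M i) := by
  rw [Module.Flat.iff_rTensor_injective']
  intro I
  have : Module.FinitePresentation R I := Module.finitePresentation_of_finite R I
  intro x y hxy
  apply piRightHom_injective M
  ext i
  apply Module.Flat.rTensor_preserves_injective_linearMap (M := M i) I.subtype I.subtype_injective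
  rw [← piRightHom_rTensor, hxy, piRightHom_rTensor]

end TensorPi

section BaseChange

variable {R : Type*} [CommRing R] (S : Type*) [CommRing S] [Algebra R S]

theorem isBaseChange_piMap [Module.FinitePresentation R S] {ι : Type*} {M M' : ι → Type*}
    [∀ i, AddCommGroup (M i)] [∀ i, Module R (M i)] [∀ i, AddCommGroup (M' i)]
    [∀ i, Module R (M' i)] [∀ i, Module S (M' i)] [∀ i, IsScalarTower R S (M' i)]
    {f : ∀ i, M i →ₗ[R] M' i} (hf : ∀ i, IsBaseChange S (f i)) :
    IsBaseChange S (LinearMap.piMap f) := by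
  let e : S ⊗[R] (∀ i, M i) ≃ₗ[S] ∀ i, S ⊗[R] M i :=
    .ofBijective (piRightHom R S S M) ⟨piRightHom_injective M, piRightHom_surjective M⟩
  refine .of_equiv (e ≪≫ₗ .piCongrRight fun i ↦ (hf i).equiv) fun x ↦ ?_
  ext i
  exact ((hf i).equiv_tmul 1 (x i)).trans (one_smul S _)

variable {S} {M M' N N' : Type*} [AddCommGroup M] [Module R M] [AddCommGroup N] [Module R N]
  [AddCommGroup M'] [Module R M'] [Module S M'] [IsScalarTower R S M']
  [AddCommGroup N'] [Module R N'] [Module S N'] [IsScalarTower R S N']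
  {f : M →ₗ[R] M'} {g : N →ₗ[R] N'}

theorem surjective_of_isBaseChange (hS : Surjective (algebraMap R S)) (hf : IsBaseChange S f) :
    Surjective f := by
  intro y
  obtain ⟨x, hx⟩ := TensorProduct.mk_surjective R M S hS (hf.equiv.symm y)
  refine ⟨x, hf.equiv.symm.injective ?_⟩
  rw [hf.equiv_symm_apply, ← hx, TensorProduct.mk_apply]

theorem lid_rTensor_subtype_mem_smul_top (I : Ideal R) (w : I ⊗[R] M) :
    TensorProduct.lid R M (I.subtype.rTensor M w) ∈ I • (⊤ : Submodule R M) := by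
  induction w with
  | zero => simp only [map_zero, Submodule.zero_mem]
  | tmul a m => exact Submodule.smul_mem_smul a.2 Submodule.mem_top
  | add w w' hw hw' => simpa only [map_add] using Submodule.add_mem _ hw hw'

theorem ker_eq_smul_top_of_isBaseChange (hS : Surjective (algebraMap R S))
    (hf : IsBaseChange S f) :
    LinearMap.ker f = RingHom.ker (algebraMap R S) • (⊤ : Submodule R M) := by
  apply le_antisymm
  · intro x hx
    have hex : Exact (RingHom.ker (algebraMap R S)).subtype (Algebra.linearMap R S) :=
      LinearMap.exact_subtype_ker_map (Algebra.linearMap R S)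
    have hx' : (Algebra.linearMap R S).rTensor M (1 ⊗ₜ x) = 0 := by
      rw [LinearMap.rTensor_tmul, Algebra.linearMap_apply, map_one, ← hf.equiv_symm_apply,
        LinearMap.mem_ker.mp hx, map_zero]
    obtain ⟨w, hw⟩ := (rTensor_exact M hex hS _).mp hx'
    simpa only [hw, TensorProduct.lid_tmul, one_smul] using lid_rTensor_subtype_mem_smul_top _ w
  · refine Submodule.smul_le.mpr fun a ha x _ ↦ ?_
    rw [LinearMap.mem_ker, map_smul, ← algebraMap_smul S, RingHom.mem_ker.mp ha, zero_smul]

/-- Base change of a linear equivalence: `e` is transported along base changes `f` and `g` of its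
source and target to `S`. -/
noncomputable def linearEquivOfIsBaseChange (hf : IsBaseChange S f) (hg : IsBaseChange S g)
    (e : M ≃ₗ[R] N) : M' ≃ₗ[S] N' :=
  hf.equiv.symm ≪≫ₗ e.baseChange R S M N ≪≫ₗ hg.equiv

end BaseChange

theorem eq_top_of_sup_smul_top_eq_top_of_isNilpotent {R M : Type*} [CommRing R] [AddCommGroup M]
    [Module R M] {I : Ideal R} (hI : IsNilpotent I) {N : Submodule R M}
    (h : N ⊔ I • (⊤ : Submodule R M) = ⊤) : N = ⊤ := by
  have hpow (n : ℕ) : N ⊔ I ^ n • (⊤ : Submodule R M) = ⊤ := by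
    induction n with
    | zero => simp only [pow_zero, Ideal.one_eq_top, Submodule.top_smul, sup_top_eq]
    | succ n ih =>
      rw [eq_top_iff]
      calc (⊤ : Submodule R M) = N ⊔ I ^ n • (N ⊔ I • (⊤ : Submodule R M)) := by rw [h, ih]
        _ = N ⊔ (I ^ n • N ⊔ I ^ (n + 1) • (⊤ : Submodule R M)) := by
          rw [Submodule.smul_sup, ← Submodule.mul_smul, ← pow_succ]
        _ ≤ N ⊔ I ^ (n + 1) • (⊤ : Submodule R M) :=
          sup_le le_sup_left (sup_le_sup_right Submodule.smul_le_right _)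
  obtain ⟨n, hn⟩ := hI
  simpa only [hn, Submodule.zero_eq_bot, Submodule.bot_smul, sup_bot_eq] using hpow n

theorem span_eq_top_of_isBaseChange {R S : Type*} [CommRing R] [CommRing S] [Algebra R S]
    {M M' : Type*} [AddCommGroup M] [Module R M] [AddCommGroup M'] [Module R M'] [Module S M']
    [IsScalarTower R S M'] {f : M →ₗ[R] M'} (hS : Surjective (algebraMap R S))
    (hI : IsNilpotent (RingHom.ker (algebraMap R S))) (hf : IsBaseChange S f) {s : Set M}
    (hs : Submodule.span S (f '' s) = ⊤) : Submodule.span R s = ⊤ := by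
  apply eq_top_of_sup_smul_top_eq_top_of_isNilpotent hI
  rw [← ker_eq_smul_top_of_isBaseChange hS hf, ← Submodule.comap_map_eq, Submodule.map_span,
    ← Submodule.restrictScalars_span R S hS, hs, Submodule.restrictScalars_top,
    Submodule.comap_top]

section Residue

variable {R : Type*} [CommRing R] [IsLocalRing R] {M M' N N' : Type*}
  [AddCommGroup M] [Module R M] [AddCommGroup M'] [Module R M'] [Module (ResidueField R) M']
  [IsScalarTower R (ResidueField R) M'] [AddCommGroup N] [Module R N] [AddCommGroup N']
  [Module R N'] [Module (ResidueField R) N'] [IsScalarTower R (ResidueField R) N']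
  {f : M →ₗ[R] M'} {g : N →ₗ[R] N'}

theorem linearIndependent_of_isBaseChange_residueField [Module.Flat R M]
    (hf : IsBaseChange (ResidueField R) f) {B : Type*} {v : B → M}
    (hv : LinearIndependent (ResidueField R) (f ∘ v)) : LinearIndependent R v := by
  apply Module.IsLocalRing.linearIndependent_of_flat
  convert! hv.map' hf.equiv.symm.toLinearMap hf.equiv.symm.ker
  ext j
  exact (hf.equiv_symm_apply (v j)).symm

theorem nonempty_basis_of_isBaseChange_residueField (hm : IsNilpotent (maximalIdeal R))
    [Module.Flat R M] (hf : IsBaseChange (ResidueField R) f) {B : Type*}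
    (b : Module.Basis B (ResidueField R) M') : Nonempty (Module.Basis B R M) := by
  have hS : Surjective (algebraMap R (ResidueField R)) := residue_surjective
  have hI : IsNilpotent (RingHom.ker (algebraMap R (ResidueField R))) := by
    rwa [ResidueField.algebraMap_eq, ker_residue]
  choose v hv using fun j ↦ surjective_of_isBaseChange hS hf (b j)
  have hfv : f ∘ v = b := funext hv
  have hli : LinearIndependent R v :=
    linearIndependent_of_isBaseChange_residueField hf (hfv ▸ b.linearIndependent)
  have hspan : Submodule.span R (Set.range v) = ⊤ :=
    span_eq_top_of_isBaseChange hS hI hf (by rw [← Set.range_comp, hfv, b.span_eq])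
  exact ⟨.mk hli hspan.ge⟩

theorem nonempty_linearEquiv_iff_of_isBaseChange_residueField (hm : IsNilpotent (maximalIdeal R))
    [Module.Flat R M] [Module.Flat R N] (hf : IsBaseChange (ResidueField R) f)
    (hg : IsBaseChange (ResidueField R) g) :
    Nonempty (M ≃ₗ[R] N) ↔ Nonempty (M' ≃ₗ[ResidueField R] N') := by
  refine ⟨fun ⟨e⟩ ↦ ⟨linearEquivOfIsBaseChange hf hg e⟩, fun ⟨e⟩ ↦ ?_⟩
  let b := Module.Basis.ofVectorSpace (ResidueField R) M'
  obtain ⟨bM⟩ := nonempty_basis_of_isBaseChange_residueField hm hf b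
  obtain ⟨bN⟩ := nonempty_basis_of_isBaseChange_residueField hm hg (b.map e)
  exact ⟨bM.equiv bN (.refl _)⟩

theorem pi_linearEquiv_iff_residueField_pi_linearEquiv_general [IsArtinianRing R] {ι κ : Type*}
    {M M' : ι → Type*} [∀ i, AddCommGroup (M i)] [∀ i, Module R (M i)] [∀ i, Module.Flat R (M i)]
    [∀ i, AddCommGroup (M' i)] [∀ i, Module R (M' i)] [∀ i, Module (ResidueField R) (M' i)]
    [∀ i, IsScalarTower R (ResidueField R) (M' i)]
    {N N' : κ → Type*} [∀ j, AddCommGroup (N j)] [∀ j, Module R (N j)] [∀ j, Module.Flat R (N j)]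
    [∀ j, AddCommGroup (N' j)] [∀ j, Module R (N' j)] [∀ j, Module (ResidueField R) (N' j)]
    [∀ j, IsScalarTower R (ResidueField R) (N' j)]
    {f : ∀ i, M i →ₗ[R] M' i} (hf : ∀ i, IsBaseChange (ResidueField R) (f i))
    {g : ∀ j, N j →ₗ[R] N' j} (hg : ∀ j, IsBaseChange (ResidueField R) (g j)) :
    Nonempty ((∀ i, M i) ≃ₗ[R] ∀ j, N j) ↔
      Nonempty ((∀ i, M' i) ≃ₗ[ResidueField R] ∀ j, N' j) := by
  have hm : IsNilpotent (maximalIdeal R) :=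
    (isArtinianRing_iff_isNilpotent_maximalIdeal R).mp inferInstance
  have : Module.FinitePresentation R (ResidueField R) := Module.finitePresentation_of_finite R _
  have := flat_pi (R := R) M
  have := flat_pi (R := R) N
  exact nonempty_linearEquiv_iff_of_isBaseChange_residueField hm
    (isBaseChange_piMap _ hf) (isBaseChange_piMap _ hg)

end Residue

/-- Let `(R, m)` be a local Artinian commutative ring with residue field
`F = R/m`, and let `ι, κ` be index sets. Then `R^ι ≅ R^κ` as `R`-modules if and only if
`F^ι ≅ F^κ` as `F`-vector spaces. -/
theorem pi_linearEquiv_iff_residueField_pi_linearEquiv (R : Type u) [CommRing R]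
    [IsLocalRing R] [IsArtinianRing R] (ι κ : Type u) :
    Nonempty ((ι → R) ≃ₗ[R] (κ → R)) ↔
      Nonempty ((ι → IsLocalRing.ResidueField R) ≃ₗ[IsLocalRing.ResidueField R]
        (κ → IsLocalRing.ResidueField R)) :=
  pi_linearEquiv_iff_residueField_pi_linearEquiv_general
    (fun _ ↦ IsBaseChange.linearMap R (ResidueField R))
    (fun _ ↦ IsBaseChange.linearMap R (ResidueField R))
end

section
/- Let (R, m) be a local Artinian commutative ring and λ an infinite cardinal (index set). Then R^λ is a free R-module and its rank equals card(R/m)^λ (cardinal exponentiation), where R/m is the residue field of R. -/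
universe u

/-!
A flat module over a local ring whose maximal ideal is nilpotent is free: a lift of a basis of
`k ⊗ M` is linearly independent by flatness, and it spans `M` since Nakayama's lemma needs no
finiteness when the ideal is nilpotent. Over a Noetherian ring, `R^ι` is flat because the linear
relations with given coefficients form a finitely generated module, so a relation in `R^ι`, which
is trivial in each coordinate, is trivialised uniformly by the generators. Finally `k ⊗ R^ι = k^ι`
since the maximal ideal is finitely generated, and the dimension of `k^ι` is given by the
Erdős–Kaplansky theorem.
-/

universe v w

open IsLocalRing Module TensorProduct

section Nakayama

variable {R M : Type*} [CommRing R] [AddCommGroup M] [Module R M] {I : Ideal R}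

theorem sup_pow_smul_top_eq_top {N : Submodule R M} (h : N ⊔ I • ⊤ = ⊤) (n : ℕ) :
    N ⊔ I ^ n • ⊤ = ⊤ := by
  induction n with
  | zero => simp
  | succ n ih =>
    refine top_le_iff.mp ?_
    calc ⊤ = N ⊔ I • (N ⊔ I ^ n • ⊤) := by rw [ih, h]
      _ = N ⊔ (I • N ⊔ I ^ (n + 1) • ⊤) := by rw [Submodule.smul_sup, pow_succ', Submodule.mul_smul]
      _ ≤ N ⊔ I ^ (n + 1) • ⊤ :=
        sup_le le_sup_left (sup_le_sup_right Submodule.smul_le_right _)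

theorem eq_top_of_sup_smul_top_eq_top (hI : IsNilpotent I) {N : Submodule R M}
    (h : N ⊔ I • ⊤ = ⊤) : N = ⊤ := by
  obtain ⟨n, hn⟩ := hI
  simpa [hn] using sup_pow_smul_top_eq_top h n

theorem eq_top_of_map_tensorProductMk_eq_top (hI : IsNilpotent I) {N : Submodule R M}
    (h : N.map (TensorProduct.mk R (R ⧸ I) M 1) = ⊤) : N = ⊤ := by
  apply eq_top_of_sup_smul_top_eq_top hI
  rw [← LinearMap.ker_tensorProductMk, ← Submodule.comap_map_eq, h, Submodule.comap_top]

end Nakayama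

section LocalRing

variable {R M : Type*} [CommRing R] [IsLocalRing R] [AddCommGroup M] [Module R M]

theorem span_range_eq_top_of_isNilpotent_maximalIdeal (hm : IsNilpotent (maximalIdeal R))
    {κ : Type*} {v : κ → M} (b : Basis κ (ResidueField R) (ResidueField R ⊗[R] M))
    (hv : ∀ i, 1 ⊗ₜ v i = b i) : Submodule.span R (Set.range v) = ⊤ := by
  apply eq_top_of_map_tensorProductMk_eq_top hm
  have hb : TensorProduct.mk R (ResidueField R) M 1 ∘ v = b := funext hv
  change Submodule.map (TensorProduct.mk R (ResidueField R) M 1) _ = _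
  rw [Submodule.map_span, ← Set.range_comp, hb,
    ← Submodule.restrictScalars_span R (ResidueField R) residue_surjective, b.span_eq]
  rfl

theorem free_of_flat_of_isNilpotent_maximalIdeal (hm : IsNilpotent (maximalIdeal R)) [Flat R M] :
    Free R M := by
  let b := Free.chooseBasis (ResidueField R) (ResidueField R ⊗[R] M)
  obtain ⟨v, hv : TensorProduct.mk R (ResidueField R) M 1 ∘ v = b⟩ :=
    (TensorProduct.mk_surjective R M (ResidueField R) residue_surjective).comp_left b
  have hli : LinearIndependent R v :=
    IsLocalRing.linearIndependent_of_flat v (hv ▸ b.linearIndependent)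
  have hspan := span_range_eq_top_of_isNilpotent_maximalIdeal hm b (congrFun hv)
  exact .of_basis (.mk hli hspan.ge)

end LocalRing

section Pi

variable {R ι : Type*} [CommRing R]

theorem exists_eq_sum_smul_of_sum_smul_eq_zero {M α β : Type*} [AddCommGroup M] [Module R M]
    [Flat R M] [Fintype α] [Fintype β] {f : α → R} {g : β → α → R}
    (hg : LinearMap.ker (Fintype.linearCombination R f) ≤ Submodule.span R (Set.range g))
    {x : α → M} (hx : ∑ j, f j • x j = 0) :
    ∃ y : β → M, ∀ j, x j = ∑ t, g t j • y t := by
  obtain ⟨n, a, y, hxy, ha⟩ := Flat.isTrivialRelation_of_sum_smul_eq_zero hx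
  have hspan (c : Fin n) : ∃ d : β → R, ∑ t, d t • g t = (a · c) := by
    refine (Submodule.mem_span_range_iff_exists_fun R).mp (hg ?_)
    simpa [Fintype.linearCombination_apply, mul_comm] using ha c
  choose d hd using hspan
  refine ⟨fun t ↦ ∑ c, d c t • y c, fun j ↦ ?_⟩
  have ha_eq (c : Fin n) : a j c = ∑ t, d c t * g t j := by
    simpa using (congrFun (hd c) j).symm
  calc x j = ∑ c, ∑ t, (d c t * g t j) • y c := by simp_rw [hxy, ha_eq, Finset.sum_smul]
    _ = ∑ t, g t j • ∑ c, d c t • y c := by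
      rw [Finset.sum_comm]
      simp_rw [Finset.smul_sum, smul_smul, mul_comm]

variable (M : ι → Type*) [∀ i, AddCommGroup (M i)] [∀ i, Module R (M i)]

instance flat_pi_of_isNoetherianRing [IsNoetherianRing R] [∀ i, Flat R (M i)] :
    Flat R (∀ i, M i) := by
  refine Flat.of_forall_isTrivialRelation fun {l f x} hx ↦ ?_
  obtain ⟨n, g, hg⟩ := Submodule.fg_iff_exists_fin_generating_family.mp
    (IsNoetherian.noetherian (LinearMap.ker (Fintype.linearCombination R f)))
  have hcoord (i : ι) : ∑ j, f j • x j i = 0 := by simpa using congrFun hx i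
  choose y hy using fun i ↦ exists_eq_sum_smul_of_sum_smul_eq_zero hg.ge (hcoord i)
  refine ⟨n, fun j t ↦ g t j, fun t i ↦ y i t, fun j ↦ ?_, fun t ↦ ?_⟩
  · ext i
    simp [hy i j]
  · have hgt : g t ∈ LinearMap.ker (Fintype.linearCombination R f) :=
      hg ▸ Submodule.subset_span (Set.mem_range_self t)
    simpa [Fintype.linearCombination_apply, mul_comm] using hgt

instance free_pi_of_isArtinianRing_of_isLocalRing [IsArtinianRing R] [IsLocalRing R]
    [∀ i, Flat R (M i)] : Free R (∀ i, M i) :=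
  free_of_flat_of_isNilpotent_maximalIdeal
    ((isArtinianRing_iff_isNilpotent_maximalIdeal R).mp inferInstance)

variable {M}

theorem ideal_smul_pi_univ_of_fg {I : Ideal R} (hI : I.FG) (N : ∀ i, Submodule R (M i)) :
    I • Submodule.pi Set.univ N = Submodule.pi Set.univ fun i ↦ I • N i := by
  refine le_antisymm (Submodule.smul_le.mpr fun r hr x hx i hi ↦
    Submodule.smul_mem_smul hr (hx i hi)) fun x hx ↦ ?_
  induction I, hI using Submodule.fg_induction generalizing x with
  | singleton a =>
    simp only [Submodule.mem_pi, Submodule.ideal_span_singleton_smul,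
      Submodule.mem_smul_pointwise_iff_exists] at hx ⊢
    choose y hy hyx using fun i ↦ hx i trivial
    exact ⟨y, fun i _ ↦ hy i, funext hyx⟩
  | sup I J _ _ hI hJ =>
    simp only [Submodule.sup_smul] at hx ⊢
    choose y hy z hz hyz using fun i ↦ Submodule.mem_sup.mp (hx i trivial)
    rw [← show y + z = x from funext hyz]
    exact Submodule.add_mem_sup (hI y fun i _ ↦ hy i) (hJ z fun i _ ↦ hz i)

theorem piRightHom_quotient_bijective {I : Ideal R} (hI : I.FG) :
    Function.Bijective (piRightHom R (R ⧸ I) (R ⧸ I) M) := by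
  constructor
  · rw [injective_iff_map_eq_zero]
    intro z hz
    obtain ⟨x, rfl⟩ := TensorProduct.mk_surjective R _ (R ⧸ I) Ideal.Quotient.mk_surjective z
    have hx (i : ι) : x i ∈ I • (⊤ : Submodule R (M i)) := by
      rw [← LinearMap.ker_tensorProductMk]
      exact congrFun hz i
    have hx_pi : x ∈ I • (⊤ : Submodule R (∀ i, M i)) := by
      rw [← Submodule.pi_top Set.univ, ideal_smul_pi_univ_of_fg hI]
      exact fun i _ ↦ hx i
    rwa [← LinearMap.ker_tensorProductMk] at hx_pi
  · intro z
    choose x hx using fun i ↦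
      TensorProduct.mk_surjective R _ (R ⧸ I) Ideal.Quotient.mk_surjective (z i)
    exact ⟨1 ⊗ₜ x, funext hx⟩

end Pi

section Rank

variable (R : Type u) (ι : Type v) [CommRing R] [IsArtinianRing R] [IsLocalRing R]

theorem lift_rank_pi_eq_rank_pi_residueField_tensorProduct (M : ι → Type w)
    [∀ i, AddCommGroup (M i)] [∀ i, Module R (M i)] [∀ i, Flat R (M i)] :
    Cardinal.lift.{u} (Module.rank R (∀ i, M i)) =
      Module.rank (ResidueField R) (∀ i, ResidueField R ⊗[R] M i) := by
  have hbij : Function.Bijective (piRightHom R (ResidueField R) (ResidueField R) M) :=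
    piRightHom_quotient_bijective (IsNoetherian.noetherian (maximalIdeal R))
  rw [← (LinearEquiv.ofBijective _ hbij).rank_eq, rank_baseChange]

theorem rank_fun_eq_rank_fun_residueField :
    Module.rank R (ι → R) = Module.rank (ResidueField R) (ι → ResidueField R) := by
  have e : (ι → ResidueField R ⊗[R] R) ≃ₗ[ResidueField R] (ι → ResidueField R) :=
    .piCongrRight fun _ ↦ AlgebraTensorModule.rid R (ResidueField R) (ResidueField R)
  rw [← e.rank_eq, ← lift_rank_pi_eq_rank_pi_residueField_tensorProduct R ι fun _ ↦ R,
    Cardinal.lift_id'.{u, max u v}]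

end Rank

/-- Let `(R, m)` be a local Artinian commutative ring and `ι` an infinite
index set. Then `R^ι` is a free `R`-module of rank `card (R/m) ^ card ι`
(cardinal exponentiation), where `R/m` is the residue field of `R`. -/
theorem pi_free_and_rank_eq_card_residueField_pow (R : Type u) [CommRing R] [IsLocalRing R]
    [IsArtinianRing R] (ι : Type u) [Infinite ι] :
    Module.Free R (ι → R) ∧
      Module.rank R (ι → R) = Cardinal.mk (IsLocalRing.ResidueField R) ^ Cardinal.mk ι := by
  refine ⟨inferInstance, ?_⟩
  calc Module.rank R (ι → R)
      = Module.rank (ResidueField R) (ι → ResidueField R) := rank_fun_eq_rank_fun_residueField R ι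
    _ = Cardinal.mk (ι → ResidueField R) := rank_fun_infinite
    _ = Cardinal.mk (ResidueField R) ^ Cardinal.mk ι := Cardinal.power_def _ _
end
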